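/- arXiv:1402.4351 — 5 statements merged into one kernel-verified Lean document; each statement's English description precedes it below -/
import Mathlib

section
/- Let (X,P) be a poset on a nonempty finite set X. If dim(X,P) = n, then there exists a sequence of recursive partial-conjugates P_1,…,P_n on X with P_1 = P (hence P is at most n-fold). -/
/-- `P` is a partial order (reflexive, antisymmetric, transitive) on `X`. -/
def IsPartialOrderRel {X : Type*} (P : X → X → Prop) : Prop :=
  (∀ x, P x x) ∧ (∀ x y, P x y → P y x → x = y) ∧ (∀ x y z, P x y → P y z → P x z)

/-- `L` is a linear order (complete, antisymmetric, transitive) on `X`. -/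
def IsLinearOrderRel {X : Type*} (L : X → X → Prop) : Prop :=
  (∀ x y, L x y ∨ L y x) ∧ (∀ x y, L x y → L y x → x = y) ∧ (∀ x y z, L x y → L y z → L x z)

/-- The dual relation: `x P^d y ↔ y P x`. -/
def dualRel {X : Type*} (P : X → X → Prop) : X → X → Prop := fun x y => P y x

/-- Union of two binary relations. -/
def relUnion {X : Type*} (P Q : X → X → Prop) : X → X → Prop := fun x y => P x y ∨ Q x y

/-- `x` and `y` are comparable in `P`. -/
def Compar {X : Type*} (P : X → X → Prop) (x y : X) : Prop := P x y ∨ P y x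

/-- `P` and `Q` are conjugate: every pair of distinct elements is comparable
in exactly one of them. -/
def ConjugateRel {X : Type*} (P Q : X → X → Prop) : Prop :=
  ∀ x y : X, x ≠ y → Xor' (Compar P x y) (Compar Q x y)

/-- `Q` is a partial-conjugate of `P`:
(i) every pair of distinct elements is comparable in at most one of `P`, `Q`;
(ii) `P ∪ Q` is a partial order;
(iii) the transitive closure of `P ∪ Q^d` is a partial order. -/
def IsPartialConjugate {X : Type*} (P Q : X → X → Prop) : Prop :=
  (∀ x y : X, x ≠ y → ¬(Compar P x y ∧ Compar Q x y)) ∧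
  IsPartialOrderRel (relUnion P Q) ∧
  IsPartialOrderRel (Relation.TransGen (relUnion P (dualRel Q)))

/-- The union `P₁ ∪ ⋯ ∪ P_k` (indices from 1 to `k`). -/
def unionUpTo {X : Type*} (Ps : ℕ → X → X → Prop) (k : ℕ) : X → X → Prop :=
  fun x y => ∃ i, 1 ≤ i ∧ i ≤ k ∧ Ps i x y

/-- `Ps 1, …, Ps n` is a sequence of recursive partial-conjugates. -/
def RecPartialConjSeq {X : Type*} (n : ℕ) (Ps : ℕ → X → X → Prop) : Prop :=
  (∀ i, 1 ≤ i → i ≤ n → IsPartialOrderRel (Ps i)) ∧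
  (∀ k, 2 ≤ k → k ≤ n - 1 → IsPartialConjugate (unionUpTo Ps (k - 1)) (Ps k)) ∧
  ConjugateRel (unionUpTo Ps (n - 1)) (Ps n)

/-- `P` is the intersection of `n` linear orders on `X`. -/
def RealizedBy {X : Type*} (n : ℕ) (P : X → X → Prop) : Prop :=
  ∃ L : Fin n → X → X → Prop, (∀ i, IsLinearOrderRel (L i)) ∧
    ∀ x y, P x y ↔ ∀ i, L i x y

/-- The dimension of the poset `(X, P)`: the smallest `n` such that `P` is the
intersection of `n` linear orders. -/
noncomputable def posetDim {X : Type*} (P : X → X → Prop) : ℕ :=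
  sInf {n | RealizedBy n P}

/-- `P` is `n`-fold: `n` is the smallest integer such that there is a sequence of
recursive partial-conjugates `P₁, …, P_n` with `P₁ = P`. -/
def IsNFold {X : Type*} (n : ℕ) (P : X → X → Prop) : Prop :=
  IsLeast {m | ∃ Ps : ℕ → X → X → Prop, RecPartialConjSeq m Ps ∧ Ps 1 = P} n


theorem szp {X : Type*} (R : X → X → Prop) (hR : IsPartialOrderRel R) :
    ∃ L : X → X → Prop, IsLinearOrderRel L ∧ ∀ x y, R x y → L x y := by
  obtain ⟨h1, h2, h3⟩ := hR
  haveI : IsPartialOrder X R := { refl := h1, antisymm := h2, trans := h3 }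
  obtain ⟨L, hL, hle⟩ := extend_partialOrder R
  exact ⟨L, ⟨fun x y => hL.total x y, fun x y => hL.antisymm x y,
    fun x y z => hL.trans x y z⟩, fun x y h => hle x y h⟩

theorem szp2 {X : Type*} (P : X → X → Prop) (hP : IsPartialOrderRel P) (x y : X) :
    ∃ L : X → X → Prop, IsLinearOrderRel L ∧ (∀ a b, P a b → L a b) ∧ (L x y → P x y) := by
  by_cases hxy : P x y
  · obtain ⟨L, h1, h2⟩ := szp P hP
    exact ⟨L, h1, h2, fun _ => hxy⟩
  · obtain ⟨h1, h2, h3⟩ := hP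
    obtain ⟨L, hL, h⟩ := szp (fun a b => P a b ∨ (P a y ∧ P x b)) (by
      refine ⟨fun a => Or.inl (h1 a), ?_, ?_⟩
      · rintro a b (h | ⟨h, h'⟩) (k | ⟨k, k'⟩)
        · exact h2 _ _ h k
        · exact absurd (h3 _ _ _ k' (h3 _ _ _ h k)) hxy
        · exact absurd (h3 _ _ _ h' (h3 _ _ _ k h)) hxy
        · exact absurd (h3 _ _ _ h' k) hxy
      · rintro a b c (h | ⟨h, h'⟩) (k | ⟨k, k'⟩)
        · exact Or.inl (h3 _ _ _ h k)
        · exact Or.inr ⟨h3 _ _ _ h k, k'⟩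
        · exact Or.inr ⟨h, h3 _ _ _ h' k⟩
        · exact Or.inr ⟨h, k'⟩)
    refine ⟨L, hL, fun a b k => h a b (Or.inl k), fun k => ?_⟩
    have e := hL.2.1 x y k (h y x (Or.inr ⟨h1 y, h1 x⟩))
    subst e
    exact h1 x

theorem exists_realizer {X : Type*} [Fintype X] (P : X → X → Prop) (hP : IsPartialOrderRel P) :
    ∃ n, RealizedBy n P := by
  choose L hL1 hL2 hL3 using szp2 P hP
  let e := Fintype.equivFin (X × X)
  refine ⟨Fintype.card (X × X), fun i => L (e.symm i).1 (e.symm i).2, fun i => hL1 _ _,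
    fun x y => ⟨fun h i => hL2 _ _ _ _ h, fun h => ?_⟩⟩
  have := h (e (x, y))
  simp only [Equiv.symm_apply_apply] at this
  exact hL3 _ _ this

/-- The intersection of the linear orders with (0-based) index at least `k - 1`. -/
def tailInter {X : Type*} (n : ℕ) (M : ℕ → X → X → Prop) (k : ℕ) : X → X → Prop :=
  fun x y => ∀ i, k ≤ i + 1 → i < n → M i x y

/-- The sequence of recursive partial-conjugates. -/
def seqPs {X : Type*} (n : ℕ) (M : ℕ → X → X → Prop) (k : ℕ) : X → X → Prop :=
  fun x y => tailInter n M k x y ∧ (2 ≤ k → x = y ∨ M (k - 2) y x)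

theorem union_eq {X : Type*} (n : ℕ) (M : ℕ → X → X → Prop) (hM : ∀ i, IsLinearOrderRel (M i))
    (k : ℕ) (hk : 1 ≤ k) : unionUpTo (seqPs n M) k = tailInter n M k := by
  induction k, hk using Nat.le_induction with
  | base =>
    funext x y
    apply propext
    constructor
    · rintro ⟨i, h1, h2, h⟩
      obtain rfl : i = 1 := by omega
      exact h.1
    · intro h
      exact ⟨1, le_rfl, le_rfl, h, fun h => by omega⟩
  | succ k hk ih =>
    funext x y
    apply propext
    constructor
    · rintro ⟨i, h1, h2, h⟩
      exact fun j hj hjn => h.1 j (by omega) hjn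
    · intro h
      rcases (hM (k - 1)).1 x y with h' | h'
      · have : tailInter n M k x y := by
          intro j hj hjn
          by_cases e : j = k - 1
          · rw [e]; exact h'
          · exact h j (by omega) hjn
        rw [← ih] at this
        obtain ⟨i, h1, h2, h3⟩ := this
        exact ⟨i, h1, by omega, h3⟩
      · exact ⟨k + 1, by omega, le_rfl, h, fun _ => Or.inr h'⟩

theorem tail_po {X : Type*} (n : ℕ) (M : ℕ → X → X → Prop) (hM : ∀ i, IsLinearOrderRel (M i))
    (k : ℕ) (hk : k ≤ n) (hn : 1 ≤ n) : IsPartialOrderRel (tailInter n M k) := by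
  refine ⟨fun x i _ _ => (or_self_iff.1 ((hM i).1 x x)), fun x y h h' => ?_,
    fun x y z h h' i hi hin => (hM i).2.2 x y z (h i hi hin) (h' i hi hin)⟩
  exact (hM (n-1)).2.1 x y (h _ (by omega) (by omega)) (h' _ (by omega) (by omega))

theorem seq_po {X : Type*} (n : ℕ) (M : ℕ → X → X → Prop) (hM : ∀ i, IsLinearOrderRel (M i))
    (k : ℕ) (hk : k ≤ n) (hn : 1 ≤ n) : IsPartialOrderRel (seqPs n M k) := by
  obtain ⟨h1, h2, h3⟩ := tail_po n M hM k hk hn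
  refine ⟨fun x => ⟨h1 x, fun _ => Or.inl rfl⟩, fun x y h h' => h2 x y h.1 h'.1,
    fun x y z h h' => ⟨h3 x y z h.1 h'.1, fun hk => ?_⟩⟩
  rcases h.2 hk with rfl | a
  · exact h'.2 hk
  · rcases h'.2 hk with rfl | b
    · exact Or.inr a
    · exact Or.inr ((hM _).2.2 _ _ _ b a)

theorem disj {X : Type*} (n : ℕ) (M : ℕ → X → X → Prop) (hM : ∀ i, IsLinearOrderRel (M i))
    (k : ℕ) (hk2 : 2 ≤ k) (hk : k ≤ n) (x y : X) (hxy : x ≠ y) :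
    ¬(Compar (tailInter n M (k - 1)) x y ∧ Compar (seqPs n M k) x y) := by
  have key : ∀ x y : X, x ≠ y → tailInter n M (k - 1) x y → ¬ Compar (seqPs n M k) x y := by
    rintro x y hxy h (⟨h1, h2⟩ | ⟨h1, h2⟩)
    · rcases h2 hk2 with e | e
      · exact hxy e
      · exact hxy ((hM (k-2)).2.1 x y (h _ (by omega) (by omega)) e)
    · exact hxy ((hM (n-1)).2.1 x y (h _ (by omega) (by omega)) (h1 _ (by omega) (by omega)))
  rintro ⟨h | h, h'⟩
  · exact key x y hxy h h'
  · exact key y x hxy.symm h h'.symm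

theorem stmt1 {X : Type*} [Fintype X] [Nonempty X]
    (P : X → X → Prop) (hP : IsPartialOrderRel P) (n : ℕ)
    (hdim : posetDim P = n) :
    ∃ Ps : ℕ → X → X → Prop, RecPartialConjSeq n Ps ∧ Ps 1 = P := by
  have hr : RealizedBy n P := by
    rw [← hdim]
    exact Nat.sInf_mem (s := {n | RealizedBy n P}) (exists_realizer P hP)
  obtain ⟨L, hL, hPL⟩ := hr
  rcases Nat.eq_zero_or_pos n with rfl | hn
  · refine ⟨fun _ => P, ⟨fun _ _ _ => hP, fun k h1 h2 => by omega, fun x y hxy => ?_⟩, rfl⟩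
    exact absurd (hP.2.1 x y ((hPL x y).2 fun i => i.elim0) ((hPL y x).2 fun i => i.elim0)) hxy
  let M : ℕ → X → X → Prop := fun i => if h : i < n then L ⟨i, h⟩ else L ⟨0, hn⟩
  have hM : ∀ i, IsLinearOrderRel (M i) := by
    intro i
    by_cases h : i < n
    · simp only [M, h, dif_pos]; exact hL _
    · simp only [M, h, dif_neg, not_false_eq_true]; exact hL _
  have hML : ∀ i (h : i < n), M i = L ⟨i, h⟩ := fun i h => by simp only [M, h, dif_pos]
  have h1 : seqPs n M 1 = P := by
    funext x y
    apply propext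
    rw [hPL]
    constructor
    · intro h i
      have := h.1 i.1 (by omega) i.2
      rwa [hML _ i.2] at this
    · intro h
      refine ⟨fun i _ hi => ?_, fun h => by omega⟩
      rw [hML _ hi]; exact h _
  refine ⟨seqPs n M, ⟨fun i _ hi => seq_po n M hM i hi hn, fun k hk2 hkn => ?_, ?_⟩, h1⟩
  · rw [union_eq n M hM (k - 1) (by omega)]
    refine ⟨disj n M hM k hk2 (by omega), ?_, ?_⟩
    · have : relUnion (tailInter n M (k - 1)) (seqPs n M k) = tailInter n M k := by
        rw [← union_eq n M hM k (by omega), ← union_eq n M hM (k - 1) (by omega)]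
        funext x y
        apply propext
        constructor
        · rintro (⟨i, a, b, c⟩ | h)
          · exact ⟨i, a, by omega, c⟩
          · exact ⟨k, by omega, le_rfl, h⟩
        · rintro ⟨i, a, b, c⟩
          by_cases e : i = k
          · subst e; exact Or.inr c
          · exact Or.inl ⟨i, a, by omega, c⟩
      rw [this]
      exact tail_po n M hM k (by omega) hn
    · have sub : ∀ x y, Relation.TransGen
          (relUnion (tailInter n M (k - 1)) (dualRel (seqPs n M k))) x y → M (k - 2) x y := by
        have base : ∀ x y, relUnion (tailInter n M (k - 1)) (dualRel (seqPs n M k)) x y →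
            M (k - 2) x y := by
          rintro x y (h | h)
          · exact h _ (by omega) (by omega)
          · rcases h.2 hk2 with e | e
            · subst e; exact or_self_iff.1 ((hM _).1 _ _)
            · exact e
        intro x y h
        induction h with
        | single h => exact base _ _ h
        | tail _ h ih => exact (hM _).2.2 _ _ _ ih (base _ _ h)
      exact ⟨fun x => .single (Or.inl ((tail_po n M hM (k - 1) (by omega) hn).1 x)),
        fun x y h h' => (hM _).2.1 x y (sub _ _ h) (sub _ _ h'), fun x y z => .trans⟩
  · intro x y hxy
    rcases Nat.lt_or_ge n 2 with h2 | h2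
    · obtain rfl : n = 1 := by omega
      right
      constructor
      · have key : ∀ x y, M 0 x y → seqPs 1 M 1 x y := by
          intro x y h
          refine ⟨fun i _ hi => ?_, fun h => by omega⟩
          obtain rfl : i = 0 := by omega
          exact h
        exact ((hM 0).1 x y).imp (key _ _) (key _ _)
      · rintro (⟨i, a, b, _⟩ | ⟨i, a, b, _⟩) <;> omega
    · have hd := disj n M hM n h2 le_rfl x y hxy
      rw [union_eq n M hM (n - 1) (by omega)]
      have hc : ∀ x y, M (n - 1) x y →
          tailInter n M (n - 1) x y ∨ seqPs n M n x y := by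
        intro x y h
        rcases (hM (n - 2)).1 x y with e | e
        · left
          intro i hi hin
          rcases (by omega : i = n - 1 ∨ i = n - 2) with rfl | rfl
          · exact h
          · exact e
        · right
          refine ⟨fun i hi hin => ?_, fun _ => Or.inr e⟩
          obtain rfl : i = n - 1 := by omega
          exact h
      have : Compar (tailInter n M (n - 1)) x y ∨ Compar (seqPs n M n) x y := by
        rcases (hM (n - 1)).1 x y with h | h
        · exact (hc _ _ h).imp Or.inl Or.inl
        · exact (hc _ _ h).imp Or.inr Or.inr
      rcases this with h | h
      · exact Or.inl ⟨h, fun h' => hd ⟨h, h'⟩⟩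
      · exact Or.inr ⟨h, fun h' => hd ⟨h', h⟩⟩
end

section
/- Let P and Q be partial orders on the same nonempty finite set X. If P and Q are conjugate partial orders, then P ∪ Q is a linear order on X. -/
theorem stmt3 {X : Type*} [Fintype X] [Nonempty X]
    (P Q : X → X → Prop) (hP : IsPartialOrderRel P) (hQ : IsPartialOrderRel Q)
    (hconj : ConjugateRel P Q) :
    IsLinearOrderRel (relUnion P Q) := by
  obtain ⟨hPr, hPa, hPt⟩ := hP
  obtain ⟨hQr, hQa, hQt⟩ := hQ
  have hex : ∀ x y, P x y ∨ P y x ∨ Q x y ∨ Q y x := by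
    intro x y
    by_cases h : x = y
    · subst h
      exact Or.inl (hPr x)
    · rcases hconj x y h with ⟨h1, _⟩ | ⟨h1, _⟩ <;> unfold Compar at h1 <;> tauto
  have hno : ∀ x y, (P x y ∨ P y x) → (Q x y ∨ Q y x) → x = y := by
    intro x y h1 h2
    by_contra h
    rcases hconj x y h with ⟨_, h3⟩ | ⟨_, h3⟩
    · exact h3 h2
    · exact h3 h1
  refine ⟨fun x y => ?_, fun x y h1 h2 => ?_, fun x y z h1 h2 => ?_⟩
  · have := hex x y
    unfold relUnion
    tauto
  · rcases h1 with h1 | h1 <;> rcases h2 with h2 | h2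
    · exact hPa x y h1 h2
    · exact hno x y (Or.inl h1) (Or.inr h2)
    · exact hno x y (Or.inr h2) (Or.inl h1)
    · exact hQa x y h1 h2
  · rcases h1 with h1 | h1 <;> rcases h2 with h2 | h2
    · exact Or.inl (hPt x y z h1 h2)
    · rcases hex x z with h | h | h | h
      · exact Or.inl h
      · have e := hno z y (Or.inl (hPt z x y h h1)) (Or.inr h2)
        subst e
        exact Or.inl h1
      · exact Or.inr h
      · have e := hno x y (Or.inl h1) (Or.inr (hQt y z x h2 h))
        subst e
        exact Or.inr h2
    · rcases hex x z with h | h | h | h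
      · exact Or.inl h
      · have e := hno x y (Or.inr (hPt y z x h2 h)) (Or.inl h1)
        subst e
        exact Or.inl h2
      · exact Or.inr h
      · have e := hno z y (Or.inr h2) (Or.inl (hQt z x y h h1))
        subst e
        exact Or.inr h1
    · exact Or.inr (hQt x y z h1 h2)
end

section
/- Let (X,P) be a poset on a nonempty finite set X. Then dim(X,P) ≤ 2 if and only if there exists a partial order Q on X such that P and Q are conjugate partial orders. -/
theorem exists_lin_ext {X : Type*} (P : X → X → Prop) (hP : IsPartialOrderRel P) (x y : X)
    (h : ¬ P x y) : ∃ L : X → X → Prop, IsLinearOrderRel L ∧ (∀ a b, P a b → L a b) ∧ ¬ L x y := by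
  obtain ⟨hr, ha, ht⟩ := hP
  let R : X → X → Prop := fun a b => P a b ∨ (P a y ∧ P x b)
  have hR : IsPartialOrder X R :=
    { refl := fun a => Or.inl (hr a)
      trans := by
        intro a b c hab hbc
        simp only [R] at *
        rcases hab with hab | ⟨h1, h2⟩ <;> rcases hbc with hbc | ⟨h3, h4⟩
        · exact Or.inl (ht _ _ _ hab hbc)
        · exact Or.inr ⟨ht _ _ _ hab h3, h4⟩
        · exact Or.inr ⟨h1, ht _ _ _ h2 hbc⟩
        · exact absurd (ht _ _ _ h2 h3) h
      antisymm := by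
        intro a b hab hba
        simp only [R] at *
        rcases hab with hab | ⟨h1, h2⟩ <;> rcases hba with hbc | ⟨h3, h4⟩
        · exact ha _ _ hab hbc
        · exact absurd (ht _ _ _ h4 (ht _ _ _ hab h3)) h
        · exact absurd (ht _ _ _ h2 (ht _ _ _ hbc h1)) h
        · exact absurd (ht _ _ _ h2 h3) h }
  obtain ⟨L, hL, hle⟩ := extend_partialOrder R
  have hanti : ∀ a b, L a b → L b a → a = b := fun a b => hL.toIsPartialOrder.antisymm a b
  refine ⟨L, ⟨fun a b => hL.total a b, hanti,
    fun a b c => hL.toIsPartialOrder.trans a b c⟩, fun a b hab => hle _ _ (Or.inl hab), ?_⟩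
  intro hxy
  have hyx : L y x := hle _ _ (Or.inr ⟨hr y, hr x⟩)
  have := hanti _ _ hxy hyx
  subst this
  exact h (hr _)

theorem realized_nonempty {X : Type*} [Finite X] (P : X → X → Prop) (hP : IsPartialOrderRel P) :
    ∃ n, RealizedBy n P := by
  let S := {L : X → X → Prop // IsLinearOrderRel L ∧ ∀ a b, P a b → L a b}
  have : Finite S := inferInstance
  obtain ⟨n, ⟨e⟩⟩ := Finite.exists_equiv_fin S
  refine ⟨n, fun i => (e.symm i).1, fun i => (e.symm i).2.1, fun x y => ⟨fun h i => (e.symm i).2.2 _ _ h, ?_⟩⟩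
  intro h
  by_contra hn
  obtain ⟨L, h1, h2, h3⟩ := exists_lin_ext P hP x y hn
  have := h (e ⟨L, h1, h2⟩)
  simp at this
  exact h3 this

theorem union_linear {X : Type*} (P Q : X → X → Prop) (hP : IsPartialOrderRel P)
    (hQ : IsPartialOrderRel Q) (h : ConjugateRel P Q) : IsLinearOrderRel (relUnion P Q) := by
  obtain ⟨hr, ha, ht⟩ := hP
  obtain ⟨hr', ha', ht'⟩ := hQ
  have key : ∀ x y : X, x ≠ y → (P x y ∨ P y x ∨ Q x y ∨ Q y x) ∧
      ¬ ((P x y ∨ P y x) ∧ (Q x y ∨ Q y x)) := by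
    intro x y hxy
    have := h x y hxy
    unfold Xor' Xor Compar at this
    tauto
  unfold relUnion
  refine ⟨fun x y => ?_, fun x y => ?_, fun x y z => ?_⟩
  · by_cases hxy : x = y
    · subst hxy; exact Or.inl (Or.inl (hr x))
    · have := key x y hxy; tauto
  · intro h1 h2
    by_contra hxy
    have := key x y hxy
    have := ha x y
    have := ha' x y
    tauto
  · intro h1 h2
    by_cases hxz : x = z
    · subst hxz; exact Or.inl (hr x)
    by_cases hxy : x = y
    · subst hxy; exact h2
    by_cases hyz : y = z
    · subst hyz; exact h1
    have k1 := key x y hxy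
    have k2 := key y z hyz
    have k3 := key x z hxz
    have t1 := ht x y z
    have t2 := ht z x y
    have t3 := ht y z x
    have t1' := ht' x y z
    have t2' := ht' z x y
    have t3' := ht' y z x
    grind

theorem stmt4 {X : Type*} [Fintype X] [Nonempty X]
    (P : X → X → Prop) (hP : IsPartialOrderRel P) :
    posetDim P ≤ 2 ↔ ∃ Q : X → X → Prop, IsPartialOrderRel Q ∧ ConjugateRel P Q := by
  constructor
  · intro h
    have hm : RealizedBy (posetDim P) P := Nat.sInf_mem (s := {n | RealizedBy n P}) (realized_nonempty P hP)
    have h2 : ∃ L M : X → X → Prop, IsLinearOrderRel L ∧ IsLinearOrderRel M ∧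
        ∀ x y, P x y ↔ L x y ∧ M x y := by
      generalize posetDim P = n at h hm
      obtain ⟨L, hL, hLP⟩ := hm
      interval_cases n
      · have hp : ∀ x y, P x y := fun x y => (hLP x y).2 (fun i => i.elim0)
        have : IsLinearOrderRel P := ⟨fun x y => Or.inl (hp x y), hP.2⟩
        exact ⟨P, P, this, this, by simp⟩
      · exact ⟨L 0, L 0, hL 0, hL 0, fun x y => by rw [hLP]; simp⟩
      · exact ⟨L 0, L 1, hL 0, hL 1, fun x y => by rw [hLP]; simp [Fin.forall_fin_two]⟩
    obtain ⟨L, M, ⟨c, a, t⟩, ⟨c', a', t'⟩, hLM⟩ := h2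
    refine ⟨fun x y => L x y ∧ M y x, ⟨fun x => ⟨?_, ?_⟩, fun x y h1 h2 => a x y h1.1 h2.1,
      fun x y z h1 h2 => ⟨t _ _ _ h1.1 h2.1, t' _ _ _ h2.2 h1.2⟩⟩, ?_⟩
    · simpa using c x x
    · simpa using c' x x
    · intro x y hxy
      unfold Xor' Xor Compar
      have := c x y
      have := c' x y
      have := a x y
      have := a' x y
      rw [hLM, hLM]
      tauto
  · rintro ⟨Q, hQ, hc⟩
    have hQd : IsPartialOrderRel (dualRel Q) :=
      ⟨hQ.1, fun x y h1 h2 => hQ.2.1 x y h2 h1, fun x y z h1 h2 => hQ.2.2 z y x h2 h1⟩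
    have hcd : ConjugateRel P (dualRel Q) := by
      intro x y hxy
      have := hc x y hxy
      unfold Xor' Xor Compar dualRel at *
      tauto
    refine Nat.sInf_le (m := 2) ⟨![relUnion P Q, relUnion P (dualRel Q)], ?_, ?_⟩
    · rw [Fin.forall_fin_two]
      exact ⟨union_linear P Q hP hQ hc, union_linear _ _ hP hQd hcd⟩
    · intro x y
      rw [Fin.forall_fin_two]
      simp only [Matrix.cons_val_zero, Matrix.cons_val_one, relUnion, dualRel]
      refine ⟨fun h => ⟨Or.inl h, Or.inl h⟩, ?_⟩
      rintro ⟨h1 | h1, h2 | h2⟩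
      · exact h1
      · exact h1
      · exact h2
      · rw [hQ.2.1 x y h1 h2]; exact hP.1 y
end

section
/- Let m ≥ 2 and let L_1,…,L_m be linear orders on a nonempty finite set X. Then the partial order Q = L_1 ∩ ⋯ ∩ L_{m−1} ∩ (L_m)^d is a partial-conjugate of the partial order P = L_1 ∩ ⋯ ∩ L_m. -/
theorem stmt11 {X : Type*} [Fintype X] [Nonempty X]
    (m : ℕ) (hm : 2 ≤ m) (L : ℕ → X → X → Prop)
    (hL : ∀ i, 1 ≤ i → i ≤ m → IsLinearOrderRel (L i)) :
    IsPartialConjugate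
      (fun x y => ∀ i, 1 ≤ i → i ≤ m → L i x y)
      (fun x y => (∀ i, 1 ≤ i → i ≤ m - 1 → L i x y) ∧ dualRel (L m) x y) := by
  have hmm := hL m (by omega) le_rfl
  have h1 := hL 1 le_rfl (by omega)
  have hr : ∀ i, 1 ≤ i → i ≤ m → ∀ x, L i x x := fun i a b x => ((hL i a b).1 x x).elim id id
  have hU : relUnion (fun x y => ∀ i, 1 ≤ i → i ≤ m → L i x y)
      (fun x y => (∀ i, 1 ≤ i → i ≤ m - 1 → L i x y) ∧ dualRel (L m) x y)
      = fun x y => ∀ i, 1 ≤ i → i ≤ m - 1 → L i x y := by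
    funext x y
    apply propext
    constructor
    · rintro (h | h) i a b
      · exact h i a (by omega)
      · exact h.1 i a b
    · intro h
      rcases hmm.1 x y with h' | h'
      · left
        intro i a b
        rcases Nat.lt_or_ge i m with c | c
        · exact h i a (by omega)
        · have : i = m := by omega
          exact this ▸ h'
      · exact Or.inr ⟨h, h'⟩
  have hT : ∀ x y, Relation.TransGen (relUnion (fun x y => ∀ i, 1 ≤ i → i ≤ m → L i x y)
      (dualRel (fun x y => (∀ i, 1 ≤ i → i ≤ m - 1 → L i x y) ∧ dualRel (L m) x y))) x y →
      L m x y := by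
    have hs : ∀ x y, relUnion (fun x y => ∀ i, 1 ≤ i → i ≤ m → L i x y)
      (dualRel (fun x y => (∀ i, 1 ≤ i → i ≤ m - 1 → L i x y) ∧ dualRel (L m) x y)) x y →
      L m x y := by
      rintro x y (h | h)
      · exact h m (by omega) le_rfl
      · exact h.2
    intro x y h
    induction h with
    | single h => exact hs _ _ h
    | tail _ h ih => exact hmm.2.2 _ _ _ ih (hs _ _ h)
  refine ⟨?_, ?_, ?_, ?_, ?_⟩
  · rintro x y hne ⟨h | h, h' | h'⟩
    · exact hne (hmm.2.1 _ _ (h m (by omega) le_rfl) h'.2)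
    · exact hne (h1.2.1 _ _ (h 1 le_rfl (by omega)) (h'.1 1 le_rfl (by omega)))
    · exact hne (h1.2.1 _ _ (h'.1 1 le_rfl (by omega)) (h 1 le_rfl (by omega)))
    · exact hne (hmm.2.1 _ _ h'.2 (h m (by omega) le_rfl))
  · rw [hU]
    refine ⟨fun x i a b => hr i a (by omega) x, fun x y h h' => ?_, fun x y z h h' i a b => ?_⟩
    · exact h1.2.1 _ _ (h 1 le_rfl (by omega)) (h' 1 le_rfl (by omega))
    · exact (hL i a (by omega)).2.2 _ _ _ (h i a b) (h' i a b)
  · exact fun x => Relation.TransGen.single (Or.inl fun i a b => hr i a b x)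
  · exact fun x y h h' => hmm.2.1 _ _ (hT _ _ h) (hT _ _ h')
  · exact fun x y z h h' => h.trans h'
end

section
/- Let A and Q be partial orders on a nonempty finite set X such that Q is a partial-conjugate of A. If there exist linear orders L_1,…,L_m on X with A ∪ Q = L_1 ∩ ⋯ ∩ L_m, then there exists a linear order L_{m+1} on X such that A = L_1 ∩ ⋯ ∩ L_m ∩ L_{m+1}. -/
theorem stmt14 {X : Type*} [Fintype X] [Nonempty X]
    (A Q : X → X → Prop) (hA : IsPartialOrderRel A) (hQ : IsPartialOrderRel Q)
    (hpc : IsPartialConjugate A Q)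
    (m : ℕ) (L : ℕ → X → X → Prop)
    (hL : ∀ i, 1 ≤ i → i ≤ m → IsLinearOrderRel (L i))
    (hunion : ∀ x y, relUnion A Q x y ↔ ∀ i, 1 ≤ i → i ≤ m → L i x y) :
    ∃ L' : X → X → Prop, IsLinearOrderRel L' ∧
      ∀ x y, A x y ↔ ((∀ i, 1 ≤ i → i ≤ m → L i x y) ∧ L' x y) := by
  obtain ⟨hr, ha, ht⟩ := hpc.2.2
  haveI : IsPartialOrder X (Relation.TransGen (relUnion A (dualRel Q))) :=
    { refl := hr, antisymm := ha, trans := ht }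
  obtain ⟨s, hs, hle⟩ := extend_partialOrder (Relation.TransGen (relUnion A (dualRel Q)))
  have hanti : ∀ x y, s x y → s y x → x = y := fun x y h1 h2 => hs.antisymm x y h1 h2
  refine ⟨s, ⟨fun x y => hs.total x y, hanti, fun x y z h1 h2 => hs.trans x y z h1 h2⟩, ?_⟩
  intro x y
  constructor
  · intro h
    exact ⟨(hunion x y).1 (Or.inl h), hle x y (Relation.TransGen.single (Or.inl h))⟩
  · rintro ⟨h1, h2⟩
    rcases (hunion x y).2 h1 with h | h
    · exact h
    · have h3 : s y x := hle y x (Relation.TransGen.single (Or.inr h))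
      have h4 := hanti x y h2 h3
      subst h4
      exact hA.1 x
end
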